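/- Let R be an irreducible GRRS in V, θ an automorphism of R with fixed roots S, and T ⊆ S the smallest subset of S containing all odd roots of S and closed under the rule: if α ∈ T, β ∈ S and (α,β) ≠ 0, then β ∈ T. Then exactly one of the following holds: T = ∅; T = {α, −α} for an isotropic root α; or T is an irreducible GRRS in span(T) containing at least one odd root. -/

import Mathlib

/-!
The content of the trichotomy is that the odd roots of `S` are linked through `S`: two orthogonal
fixed odd roots `α ≠ ±β` have a common non-orthogonal root that is again fixed by `θ`
(`IsGRRS.exists_fixed_common_neighbor`).  Granting this, minimality of `T` shows that each part of
an orthogonal partition of `T` contains an odd root, so `T` is irreducible unless some isotropic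
`α ∈ T` is orthogonal to `T`, in which case `T = {α, -α}`.  The remaining GRRS axioms pass from `R`
to `T` because reflections in fixed roots preserve fixed roots and non-orthogonality.

To find the fixed neighbour, note that irreducibility of `R` gives a common non-orthogonal root
`γ ∈ R` (`IsGRRS.exists_common_neighbor`).  Write `k_{x,y} = 2(x,y)/(x,x)`.  No classification is
needed, only consequences of finiteness and integrality: real roots of equal norm satisfy
`|k_{x,y}| ≤ 2`, with value `2` only if `x = y`; and `k_{x,a} ∈ {±1, ±2}` for `x` real and `a`
isotropic, not orthogonal.

* If `α` and `β` are real, then `γ = ±α ± β` (`IsGRRS.eq_signed_add`), which is fixed.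
* If `α` is isotropic, `γ` may be taken real.  When `k_{γ,α} = 2`, the roots `γ - α` and
  `θγ - α` are real of norm `-(γ,γ)` and pair to `4 - k_{γ,θγ}`; as both this number and
  `k_{γ,θγ}` are at most `2`, `θγ = γ` (`IsGRRS.eq_of_pairing_two`).  When `β` is isotropic too
  and `k_{γ,α} = k_{γ,β} = 1`, the same comparison applies to `γ - α - β` and `θγ - α - β`
  (`IsGRRS.eq_of_pairing_one_one`).
* If `α` is isotropic and `β` is real, then up to sign `γ - β` is a real odd root orthogonal to
  `β`, with `k_{γ-β,α} = ±2`; it is fixed by the previous point, hence so is `γ`.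
-/

namespace GRRS

open Submodule

variable {K V : Type*} [Field K] [CharZero K] [AddCommGroup V] [Module K V]

/-- A root `α` of `R` is *odd* if it is isotropic or `2α ∈ R`; it is *even* otherwise. -/
def IsOddRoot (B : LinearMap.BilinForm K V) (R : Set V) (α : V) : Prop :=
  B α α = 0 ∨ (2 : K) • α ∈ R

/-- `S` is a (finite) generalized reflection root system in `span(S)`, equipped with the
restriction of the symmetric bilinear form `B`.  Axiom (1) is automatic; axiom (2) says that
the functional `(α, ·)` is nonzero on `span(S)`, i.e. it does not vanish on all of `S`. -/
structure IsGRRSIn (B : LinearMap.BilinForm K V) (S : Set V) : Prop where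
  finite : S.Finite
  nonempty : S.Nonempty
  zero_not_mem : (0 : V) ∉ S
  form_ne : ∀ α ∈ S, ∃ β ∈ S, B α β ≠ 0
  reflect_real : ∀ α ∈ S, B α α ≠ 0 → ∀ β ∈ S,
      ∃ n : ℤ, 2 * B α β = (n : K) * B α α ∧ β - (n : K) • α ∈ S
  reflect_iso : ∀ α ∈ S, B α α = 0 → ∃ r : V → V, Set.BijOn r S S ∧
      (∀ β ∈ S, B α β = 0 → r β = β) ∧
      (∀ β ∈ S, B α β ≠ 0 → r β = β + α ∨ r β = β - α)
  neg_mem : ∀ α ∈ S, -α ∈ S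

/-- `R` is a (finite) generalized reflection root system in `V`. -/
structure IsGRRS (B : LinearMap.BilinForm K V) (R : Set V) : Prop where
  finite : R.Finite
  nonempty : R.Nonempty
  zero_not_mem : (0 : V) ∉ R
  spans : span K R = ⊤
  form_ne : ∀ α ∈ R, B α ≠ 0
  reflect_real : ∀ α ∈ R, B α α ≠ 0 → ∀ β ∈ R,
      ∃ n : ℤ, 2 * B α β = (n : K) * B α α ∧ β - (n : K) • α ∈ R
  reflect_iso : ∀ α ∈ R, B α α = 0 → ∃ r : V → V, Set.BijOn r R R ∧
      (∀ β ∈ R, B α β = 0 → r β = β) ∧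
      (∀ β ∈ R, B α β ≠ 0 → r β = β + α ∨ r β = β - α)
  neg_mem : ∀ α ∈ R, -α ∈ R

/-- `R` is irreducible: it cannot be partitioned into two nonempty mutually
orthogonal subsets. -/
def GRRSIrreducible (B : LinearMap.BilinForm K V) (R : Set V) : Prop :=
  ¬ ∃ R₁ R₂ : Set V, R₁.Nonempty ∧ R₂.Nonempty ∧ R₁ ∪ R₂ = R ∧ Disjoint R₁ R₂ ∧
      ∀ α ∈ R₁, ∀ β ∈ R₂, B α β = 0

/-- The real (non-isotropic) roots of `R`. -/
def realRoots (B : LinearMap.BilinForm K V) (R : Set V) : Set V :=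
  {α ∈ R | B α α ≠ 0}

/-- The imaginary (isotropic) roots of `R`. -/
def imRoots (B : LinearMap.BilinForm K V) (R : Set V) : Set V :=
  {α ∈ R | B α α = 0}

/-- Two vectors are chain-connected through `C` if they are joined by a chain of elements
of `C` in which consecutive elements have nonzero inner product. -/
def chainConnected (B : LinearMap.BilinForm K V) (C : Set V) : V → V → Prop :=
  Relation.ReflTransGen (fun x y => x ∈ C ∧ y ∈ C ∧ B x y ≠ 0)

/-- The reflection in a non-isotropic vector `γ`. -/
def reflectionOf (B : LinearMap.BilinForm K V) (γ x : V) : V :=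
  x - (2 * B γ x / B γ γ) • γ

/-- `weylRel B C x y` holds iff `y` is obtained from `x` by applying a finite sequence of
reflections in elements of `C`; for `C` a set of real roots this is the relation
"`x` and `y` lie in the same orbit of the Weyl group generated by `C`". -/
def weylRel (B : LinearMap.BilinForm K V) (C : Set V) : V → V → Prop :=
  Relation.ReflTransGen (fun x y => ∃ γ ∈ C, y = reflectionOf B γ x)

/-- The canonical decomposition `V = V₀ ⊕ V₁ ⊕ ⋯ ⊕ V_n` attached to a GRRS `R`:
`comp i` is the `i`-th irreducible component `R_re^i` of the real roots (a chain-connectivity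
class), `proj i.succ` is the projection `p_i` onto `V_i = span(comp i)` and `proj 0` is the
projection `p_0` onto `V₀`, the orthogonal complement of `U = span(R_re)`. -/
structure RealDecomp (B : LinearMap.BilinForm K V) (R : Set V) (n : ℕ) where
  comp : Fin n → Set V
  proj : Fin (n + 1) → (V →ₗ[K] V)
  comp_subset : ∀ i, comp i ⊆ realRoots B R
  comp_cover : realRoots B R ⊆ ⋃ i, comp i
  comp_classes : ∀ i, ∀ α ∈ comp i, ∀ β ∈ realRoots B R,
      (β ∈ comp i ↔ chainConnected B (realRoots B R) α β)
  proj_sum : ∑ i, proj i = LinearMap.id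
  proj_comp : ∀ i j, i ≠ j → (proj i) ∘ₗ (proj j) = 0
  proj_orth : ∀ i j, i ≠ j → ∀ x y : V, B (proj i x) (proj j y) = 0
  range_succ : ∀ i : Fin n, LinearMap.range (proj i.succ) = span K (comp i)
  range_zero : LinearMap.range (proj 0) =
      LinearMap.BilinForm.orthogonal B (span K (realRoots B R))


section Lemmas

variable {B : LinearMap.BilinForm K V} {R : Set V}

/-! ### Reflections in real roots -/

lemma IsGRRS.reflect_mem (hR : IsGRRS B R) {x y : V} (hx : x ∈ R) (hy : y ∈ R)
    (hxx : B x x ≠ 0) {n : ℤ} (hn : 2 * B x y = n * B x x) : y - (n : K) • x ∈ R := by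
  obtain ⟨m, hm, hmem⟩ := hR.reflect_real x hx hxx y hy
  have h : (n : K) = m := mul_right_cancel₀ hxx (hn.symm.trans hm)
  rwa [h]

/-- Two real roots of equal norm pair to at most `2` in absolute value.  If `n = k_{x,y}`, then
`r_y x` has the same norm and pairs with `x` to `2 - n²`, which exceeds `n` in absolute value as
soon as `|n| ≥ 3`; a root `y` with `|k_{x,y}|` maximal rules this out. -/
lemma IsGRRS.abs_pairing_le_two (hR : IsGRRS B R) (hB : ∀ x y : V, B x y = B y x) {x y : V}
    (hx : x ∈ R) (hy : y ∈ R) (hxx : B x x ≠ 0) (hxy : B y y = B x x) {n : ℤ}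
    (hn : 2 * B x y = n * B x x) : |n| ≤ 2 := by
  have hex : ∀ z ∈ R, ∃ m : ℤ, 2 * B x z = m * B x x := fun z hz =>
    let ⟨m, hm, _⟩ := hR.reflect_real x hx hxx z hz
    ⟨m, hm⟩
  choose! g hg using hex
  have hfin : {z ∈ R | B z z = B x x}.Finite := hR.finite.subset (Set.sep_subset _ _)
  obtain ⟨z, ⟨hz, hzz⟩, hmax⟩ :=
    Set.exists_max_image _ (fun z => |g z|) hfin ⟨y, hy, hxy⟩
  have hgy : g y = n := by
    exact_mod_cast mul_right_cancel₀ hxx ((hg y hy).symm.trans hn)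
  have hz0 : B z z ≠ 0 := hzz ▸ hxx
  have hzx : 2 * B z x = (g z : ℤ) * B z z := by rw [hB z x, hzz]; exact hg z hz
  have hmem := hR.reflect_mem hz hx hz0 hzx
  have hnorm : B (x - (g z : K) • z) (x - (g z : K) • z) = B x x := by
    simp only [map_sub, map_smul, LinearMap.sub_apply, LinearMap.smul_apply, smul_eq_mul]
    rw [hB z x, hzz]
    linear_combination (-(g z : K)) * hg z hz
  have hpair : g (x - (g z : K) • z) = 2 - g z ^ 2 := by
    have h1 := hg _ hmem
    have h2 : (2 : K) * B x (x - (g z : K) • z) = ((2 - g z ^ 2 : ℤ) : K) * B x x := by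
      simp only [map_sub, map_smul, smul_eq_mul]
      push_cast
      linear_combination (-(g z : K)) * hg z hz
    exact_mod_cast mul_right_cancel₀ hxx (h1.symm.trans h2)
  have h1 := hmax _ ⟨hmem, hnorm⟩
  have h2 := hmax _ ⟨hy, hxy⟩
  simp only [hpair, hgy] at h1 h2
  refine h2.trans ?_
  by_contra! h3
  have h4 : g z ^ 2 - 2 ≤ |g z| := by
    have := neg_le_abs (2 - g z ^ 2)
    linarith
  rw [← sq_abs] at h4
  nlinarith

/-- Two real roots `x`, `y` with `(x,x) = (y,y) = (x,y)` coincide: otherwise the finite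
set `R` would contain the whole progression `x + n (y - x)`. -/
lemma IsGRRS.eq_of_norm_eq (hR : IsGRRS B R) (hB : ∀ x y : V, B x y = B y x) {x y : V}
    (hx : x ∈ R) (hy : y ∈ R) (hxx : B x x ≠ 0) (hyy : B y y = B x x)
    (hxy : B x y = B x x) : x = y := by
  by_contra hne
  have hyx : B y x = B x x := by rw [hB, hxy]
  have key : ∀ n : ℕ, x + (n : K) • (y - x) ∈ R ∧ x + ((n + 1 : ℕ) : K) • (y - x) ∈ R := by
    intro n
    induction n with
    | zero => simpa using ⟨hx, hy⟩
    | succ n ih =>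
      refine ⟨ih.2, ?_⟩
      have hform : ∀ a b : K, B (x + a • (y - x)) (x + b • (y - x)) = B x x := by
        intro a b
        simp only [map_sub, map_smul, map_add, LinearMap.sub_apply, LinearMap.smul_apply,
          LinearMap.add_apply, smul_eq_mul, hyy, hxy, hyx]
        ring
      have h := hR.reflect_mem ih.2 ih.1 (by rw [hform]; exact hxx) (n := 2)
        (by rw [hform, hform]; norm_num)
      convert hR.neg_mem _ h using 1
      push_cast
      module
  have hinj : Function.Injective fun n : ℕ => x + (n : K) • (y - x) := by
    intro a b hab
    have h1 : (a : K) • (y - x) = (b : K) • (y - x) := add_left_cancel hab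
    exact_mod_cast smul_left_injective K (sub_ne_zero.2 (Ne.symm hne)) h1
  exact Set.infinite_of_injective_forall_mem hinj (fun n => (key n).1) hR.finite

/-- The product of the two pairings of real roots lies in `[0, 4]`, with value `4` only for
proportional roots. -/
lemma IsGRRS.pairing_mul_pairing (hR : IsGRRS B R) (hB : ∀ x y : V, B x y = B y x) {x y : V}
    (hx : x ∈ R) (hy : y ∈ R) (hxx : B x x ≠ 0) (hyy : B y y ≠ 0) {p q : ℤ}
    (hp : 2 * B x y = p * B x x) (hq : 2 * B x y = q * B y y) :
    0 ≤ p * q ∧ p * q ≤ 4 ∧ (p * q = 4 → (2 : K) • x = (q : K) • y) := by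
  have hmem := hR.reflect_mem hy hx hyy (n := q) (by rw [hB y x]; exact hq)
  have hnorm : B (x - (q : K) • y) (x - (q : K) • y) = B x x := by
    simp only [map_sub, map_smul, LinearMap.sub_apply, LinearMap.smul_apply, smul_eq_mul]
    rw [hB y x]
    linear_combination (-(q : K)) * hq
  have hpair : 2 * B x (x - (q : K) • y) = ((2 - p * q : ℤ) : K) * B x x := by
    simp only [map_sub, map_smul, smul_eq_mul]
    push_cast
    linear_combination (-(q : K)) * hp
  have h := abs_le.1 (hR.abs_pairing_le_two hB hx hmem hxx hnorm hpair)
  refine ⟨by linarith, by linarith, fun h4 => ?_⟩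
  have hmem' := hR.neg_mem _ hmem
  have heq := hR.eq_of_norm_eq hB hx hmem' hxx
    (by rw [map_neg, map_neg, LinearMap.neg_apply, neg_neg, hnorm]) (by
    rw [h4] at hpair
    rw [map_neg]
    push_cast at hpair
    linear_combination (-1 / 2) * hpair)
  rw [two_smul]
  nth_rewrite 2 [heq]
  abel

/-! ### Isotropic roots -/

lemma IsGRRS.add_or_sub_mem (hR : IsGRRS B R) {a x : V} (ha : a ∈ R) (hx : x ∈ R)
    (haa : B a a = 0) (hax : B a x ≠ 0) : x + a ∈ R ∨ x - a ∈ R := by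
  obtain ⟨r, hr, _, h2⟩ := hR.reflect_iso a ha haa
  have := hr.mapsTo hx
  rcases h2 x hx hax with h | h <;> rw [h] at this <;> tauto

/-- If `x` is real, `a` is isotropic and `x + a` is a root, then `k_{x,a}` is `-1` or `-2`:
unless `x + a` is isotropic, integrality of its pairing with `a` makes `1 + m` divide `m`. -/
lemma IsGRRS.pairing_of_add_mem (hR : IsGRRS B R) (hB : ∀ x y : V, B x y = B y x) {x a : V}
    (ha : a ∈ R) (haa : B a a = 0) (hxx : B x x ≠ 0) {m : ℤ} (hm0 : m ≠ 0)
    (hm : 2 * B x a = m * B x x) (hmem : x + a ∈ R) : m = -1 ∨ m = -2 := by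
  by_cases h1 : m = -1
  · exact Or.inl h1
  right
  have hnorm : B (x + a) (x + a) = (1 + m : ℤ) * B x x := by
    simp only [map_add, LinearMap.add_apply, haa, hB a x]
    push_cast
    linear_combination hm
  have h1' : (1 + m : ℤ) ≠ 0 := by omega
  have hne : B (x + a) (x + a) ≠ 0 := by
    rw [hnorm]
    exact mul_ne_zero (by exact_mod_cast h1') hxx
  obtain ⟨n, hn, _⟩ := hR.reflect_real _ hmem hne a ha
  have h2 : m = n * (1 + m) := by
    have : (m : K) = ((n * (1 + m) : ℤ) : K) := by
      apply mul_right_cancel₀ hxx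
      rw [← hm]
      rw [hnorm] at hn
      simp only [map_add, LinearMap.add_apply, haa, add_zero] at hn
      rw [hn]
      push_cast
      ring
    exact_mod_cast this
  have hdvd : (1 + m) ∣ 1 := ⟨1 - n, by linear_combination -h2⟩
  rcases Int.isUnit_iff.1 (isUnit_of_dvd_one hdvd) with h | h <;> omega

lemma IsGRRS.pairing_isotropic (hR : IsGRRS B R) (hB : ∀ x y : V, B x y = B y x) {x a : V}
    (hx : x ∈ R) (ha : a ∈ R) (haa : B a a = 0) (hxx : B x x ≠ 0) {m : ℤ} (hm0 : m ≠ 0)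
    (hm : 2 * B x a = m * B x x) :
    ((m = 1 ∨ m = 2) ∧ x - a ∈ R) ∨ ((m = -1 ∨ m = -2) ∧ x + a ∈ R) := by
  have hax : B a x ≠ 0 := by
    intro h
    rw [hB x a, h, mul_zero, eq_comm] at hm
    rcases mul_eq_zero.1 hm with h | h
    · exact hm0 (by exact_mod_cast h)
    · exact hxx h
  rcases hR.add_or_sub_mem ha hx haa hax with h | h
  · exact Or.inr ⟨hR.pairing_of_add_mem hB ha haa hxx hm0 hm h, h⟩
  · have := hR.pairing_of_add_mem hB (hR.neg_mem a ha) (by simpa using haa) hxx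
      (m := -m) (by omega) (by push_cast; simp only [map_neg]; linear_combination -hm)
      (by rwa [← sub_eq_add_neg])
    exact Or.inl ⟨by omega, h⟩

/-- A real root `x` with `k_{x,a} = 2` for an isotropic root `a` is determined by its norm: since
`x - a` and `y - a` are real roots of equal norm, both `k_{x,y} = c` and `k_{x-a,y-a} = 4 - c` are
at most `2`, whence `c = 2`. -/
lemma IsGRRS.eq_of_pairing_two (hR : IsGRRS B R) (hB : ∀ x y : V, B x y = B y x) {x y a : V}
    (hx : x ∈ R) (hy : y ∈ R) (ha : a ∈ R) (haa : B a a = 0) (hxx : B x x ≠ 0)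
    (hyy : B y y = B x x) (hxa : B x a = B x x) (hya : B y a = B x x) : x = y := by
  have hsub : ∀ z ∈ R, B z z = B x x → B z a = B x x → z - a ∈ R := by
    intro z hz hzz hza
    rcases hR.pairing_isotropic hB hz ha haa (hzz ▸ hxx) (m := 2) (by norm_num)
      (by rw [hza, hzz]; norm_num) with h | h
    · exact h.2
    · omega
  obtain ⟨c, hc, _⟩ := hR.reflect_real x hx hxx y hy
  have h1 := abs_le.1 (hR.abs_pairing_le_two hB hx hy hxx hyy hc)
  have hnx : B (x - a) (x - a) = -B x x := by
    simp only [map_sub, LinearMap.sub_apply, haa, hB a x, hxa]; ring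
  have hny : B (y - a) (y - a) = -B x x := by
    simp only [map_sub, LinearMap.sub_apply, haa, hB a y, hya, hyy]; ring
  have h2 := abs_le.1 (hR.abs_pairing_le_two hB (hsub x hx rfl hxa) (hsub y hy hyy hya)
    (by rw [hnx]; exact neg_ne_zero.2 hxx) (hny.trans hnx.symm) (n := 4 - c) (by
      rw [hnx]
      simp only [map_sub, LinearMap.sub_apply, haa, hB a y, hxa, hya]
      push_cast
      linear_combination hc))
  have hc2 : c = 2 := by omega
  refine hR.eq_of_norm_eq hB hx hy hxx hyy ?_
  rw [hc2] at hc
  push_cast at hc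
  linear_combination hc / 2

/-- A real root `x` with `k_{x,a} = k_{x,b} = 1` for distinct orthogonal isotropic roots `a`, `b`
is determined by its norm: `x - a - b` is a real root of norm `-(x,x)`, and the comparison of
pairings in `IsGRRS.eq_of_pairing_two` applies with `a + b` in place of `a`. -/
lemma IsGRRS.eq_of_pairing_one_one (hR : IsGRRS B R) (hB : ∀ x y : V, B x y = B y x)
    {x y a b : V} (hx : x ∈ R) (hy : y ∈ R) (ha : a ∈ R) (hb : b ∈ R) (haa : B a a = 0)
    (hbb : B b b = 0) (hab : B a b = 0) (hne : a ≠ b) (hxx : B x x ≠ 0)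
    (hyy : B y y = B x x) (hxa : 2 * B x a = B x x) (hxb : 2 * B x b = B x x)
    (hya : 2 * B y a = B x x) (hyb : 2 * B y b = B x x) : x = y := by
  have hba : B b a = 0 := by rw [hB, hab]
  have hsub : ∀ z ∈ R, B z z = B x x → 2 * B z a = B x x → 2 * B z b = B x x →
      z - a - b ∈ R := by
    intro z hz hzz hza hzb
    have hz0 : B z z ≠ 0 := hzz ▸ hxx
    have hza' : z - a ∈ R := by
      rcases hR.pairing_isotropic hB hz ha haa hz0 (m := 1) (by norm_num)
        (by rw [hza, hzz]; norm_num) with h | h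
      · exact h.2
      · omega
    have hbz : B b (z - a) ≠ 0 := by
      rw [map_sub, hba, hB b z, sub_zero]
      intro h
      rw [h, mul_zero] at hzb
      exact hxx hzb.symm
    rcases hR.add_or_sub_mem hb hza' hbb hbz with h | h
    · -- `z - a + b` has the norm of `z` and pairs with it like `z`, forcing `a = b`
      exfalso
      have := hR.eq_of_norm_eq hB hz h hz0 (by
          simp only [map_sub, map_add, LinearMap.sub_apply, LinearMap.add_apply, haa, hbb, hab,
            hba, hB a z, hB b z]
          linear_combination hzb - hza) (by
          simp only [map_sub, map_add]
          linear_combination (hzb - hza) / 2)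
      apply hne
      have h3 : z + a = z + b := by
        nth_rewrite 1 [this]
        abel
      exact add_left_cancel h3
    · exact h
  obtain ⟨c, hc, _⟩ := hR.reflect_real x hx hxx y hy
  have h1 := abs_le.1 (hR.abs_pairing_le_two hB hx hy hxx hyy hc)
  have hnx : B (x - a - b) (x - a - b) = -B x x := by
    simp only [map_sub, LinearMap.sub_apply, haa, hbb, hab, hba, hB a x, hB b x]
    linear_combination -hxa - hxb
  have hny : B (y - a - b) (y - a - b) = -B x x := by
    simp only [map_sub, LinearMap.sub_apply, haa, hbb, hab, hba, hB a y, hB b y]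
    linear_combination hyy - hya - hyb
  have h2 := abs_le.1 (hR.abs_pairing_le_two hB (hsub x hx rfl hxa hxb) (hsub y hy hyy hya hyb)
    (by rw [hnx]; exact neg_ne_zero.2 hxx) (hny.trans hnx.symm) (n := 4 - c) (by
      rw [hnx]
      simp only [map_sub, LinearMap.sub_apply, haa, hbb, hab, hba, hB a y, hB b y]
      push_cast
      linear_combination hc - hxa - hxb - hya - hyb))
  have hc2 : c = 2 := by omega
  refine hR.eq_of_norm_eq hB hx hy hxx hyy ?_
  rw [hc2] at hc
  push_cast at hc
  linear_combination hc / 2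

/-! ### Common neighbours -/

lemma IsGRRS.exists_add_smul_mem (hR : IsGRRS B R) {x y : V} (hx : x ∈ R) (hy : y ∈ R)
    (hxy : B x y ≠ 0) : ∃ k : K, k ≠ 0 ∧ y + k • x ∈ R := by
  by_cases hxx : B x x = 0
  · rcases hR.add_or_sub_mem hx hy hxx hxy with h | h
    · exact ⟨1, one_ne_zero, by simpa using h⟩
    · exact ⟨-1, neg_ne_zero.2 one_ne_zero, by simpa [← sub_eq_add_neg] using h⟩
  · obtain ⟨n, hn, hmem⟩ := hR.reflect_real x hx hxx y hy
    refine ⟨-n, fun h => ?_, by simpa [← sub_eq_add_neg] using hmem⟩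
    rw [neg_eq_zero.1 h, zero_mul] at hn
    exact hxy ((mul_eq_zero.1 hn).resolve_left two_ne_zero)

/-- In an irreducible GRRS two orthogonal roots have a common non-orthogonal root.  A shortest
chain `α, γ, β, δ` of successively non-orthogonal roots would be shortened by replacing `γ`, `β`
by the reflection `β + k γ`. -/
lemma IsGRRS.exists_common_neighbor (hR : IsGRRS B R)
    (hirr : GRRSIrreducible B R) {α β : V} (hα : α ∈ R) (hβ : β ∈ R) (hαβ : B α β = 0) :
    ∃ γ ∈ R, B α γ ≠ 0 ∧ B γ β ≠ 0 := by
  let Q : V → Prop := fun β => B α β ≠ 0 ∨ ∃ γ ∈ R, B α γ ≠ 0 ∧ B γ β ≠ 0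
  suffices h : Q β by
    rcases h with h | h
    · exact absurd hαβ h
    · exact h
  by_contra hQ
  apply hirr
  refine ⟨{x ∈ R | Q x}, {x ∈ R | ¬ Q x}, ?_, ⟨β, hβ, hQ⟩, ?_, ?_, ?_⟩
  · by_contra hemp
    apply hR.form_ne α hα
    apply LinearMap.ext_on hR.spans
    intro x hx
    by_contra hne
    exact hemp ⟨x, hx, Or.inl hne⟩
  · ext x
    exact ⟨fun h => h.elim And.left And.left, fun h => (em (Q x)).imp (And.intro h) (And.intro h)⟩
  · rw [Set.disjoint_left]
    exact fun x h1 h2 => h2.2 h1.2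
  · rintro x ⟨hx, hQx⟩ δ ⟨hδ, hQδ⟩
    by_contra hne
    apply hQδ
    by_cases hαx : B α x = 0
    · obtain ⟨γ, hγ, h1, h2⟩ := hQx.resolve_left (not_not.2 hαx)
      by_cases hγδ : B γ δ = 0
      · obtain ⟨k, hk, hmem⟩ := hR.exists_add_smul_mem hγ hx h2
        refine Or.inr ⟨_, hmem, ?_, ?_⟩
        · simpa [hαx] using ⟨hk, h1⟩
        · simpa [hγδ] using hne
      · exact Or.inr ⟨γ, hγ, h1, hγδ⟩
    · exact Or.inr ⟨x, hx, hαx, hne⟩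

/-- A real `x` with `2x ∈ R` has even pairing `k_{x,y} = 2n` with every root `y`. -/
lemma IsGRRS.exists_even_pairing (hR : IsGRRS B R) {x y : V}
    (hx2 : (2 : K) • x ∈ R) (hy : y ∈ R) (hxx : B x x ≠ 0) :
    ∃ n : ℤ, B x y = n * B x x := by
  obtain ⟨n, hn, _⟩ := hR.reflect_real _ hx2 (by simpa using hxx) y hy
  refine ⟨n, ?_⟩
  simp only [map_smul, LinearMap.smul_apply, smul_eq_mul] at hn
  linear_combination hn / 4

/-- Let `x` be a real root with `2x ∈ R` and `y` a real root neither orthogonal nor proportional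
to `x`, the latter being witnessed by `z` with `(x,z) = 0 ≠ (y,z)`.  Then `(x,y) = ±(x,x)`
and `(y,y) = 2(x,x)`, as for a short and a middle root in type `BC₂`. -/
lemma IsGRRS.real_pairing_of_two_smul_mem (hR : IsGRRS B R) (hB : ∀ x y : V, B x y = B y x)
    {x y z : V} (hx : x ∈ R) (hx2 : (2 : K) • x ∈ R) (hy : y ∈ R) (hxx : B x x ≠ 0)
    (hyy : B y y ≠ 0) (hxy : B x y ≠ 0) (hxz : B x z = 0) (hyz : B y z ≠ 0) :
    B y y = 2 * B x x ∧ (B x y = B x x ∨ B x y = -B x x) := by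
  obtain ⟨n, hn⟩ := hR.exists_even_pairing hx2 hy hxx
  obtain ⟨q, hq, _⟩ := hR.reflect_real y hy hyy x hx
  rw [hB y x] at hq
  obtain ⟨h0, h4, h5⟩ := hR.pairing_mul_pairing hB hx hy hxx hyy (p := 2 * n) (q := q)
    (by push_cast; linear_combination 2 * hn) hq
  have hn0 : n ≠ 0 := by
    rintro rfl
    exact hxy (by simpa using hn)
  have hq0 : q ≠ 0 := by
    rintro rfl
    exact hxy (by simpa using hq)
  have h6 : 2 * n * q ≠ 4 := by
    intro h
    have := congrArg (fun v => B v z) (h5 h)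
    simp only [map_smul, LinearMap.smul_apply, smul_eq_mul, hxz, mul_zero] at this
    rcases mul_eq_zero.1 this.symm with h | h
    · exact hq0 (by exact_mod_cast h)
    · exact hyz h
  have h7 : n * q ≠ 0 := mul_ne_zero hn0 hq0
  have h8 : n * q = 1 := by
    have : 2 * n * q = 2 * (n * q) := by ring
    omega
  rcases Int.mul_eq_one_iff_eq_one_or_neg_one.1 h8 with ⟨rfl, rfl⟩ | ⟨rfl, rfl⟩
  · push_cast at hn hq
    exact ⟨by linear_combination 2 * hn - hq, Or.inl (by linear_combination hn)⟩
  · push_cast at hn hq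
    exact ⟨by linear_combination hq - 2 * hn, Or.inr (by linear_combination hn)⟩

/-- If `x` is real with `2x ∈ R` and `a` is an isotropic root not orthogonal to `x`, then
`(x,a) = ±(x,x)`, and correspondingly `x ∓ a` is a root. -/
lemma IsGRRS.isotropic_pairing_of_two_smul_mem (hR : IsGRRS B R)
    (hB : ∀ x y : V, B x y = B y x) {x a : V} (hx : x ∈ R) (hx2 : (2 : K) • x ∈ R)
    (ha : a ∈ R) (hxx : B x x ≠ 0) (haa : B a a = 0) (hxa : B x a ≠ 0) :
    (B x a = B x x ∧ x - a ∈ R) ∨ (B x a = -B x x ∧ x + a ∈ R) := by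
  obtain ⟨n, hn⟩ := hR.exists_even_pairing hx2 ha hxx
  have hn0 : n ≠ 0 := by
    rintro rfl
    exact hxa (by simpa using hn)
  rcases hR.pairing_isotropic hB hx ha haa hxx (m := 2 * n) (by omega)
    (by push_cast; linear_combination 2 * hn) with ⟨h, hmem⟩ | ⟨h, hmem⟩
  · have : n = 1 := by omega
    subst this
    exact Or.inl ⟨by simpa using hn, hmem⟩
  · have : n = -1 := by omega
    subst this
    exact Or.inr ⟨by simpa using hn, hmem⟩

/-- An isotropic root `α` and a root `β` orthogonal to it have a common non-orthogonal root which
is real: if `γ` is an isotropic one, then `γ ± α` is real. -/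
lemma IsGRRS.exists_real_common_neighbor (hR : IsGRRS B R) (hB : ∀ x y : V, B x y = B y x)
    (hirr : GRRSIrreducible B R) {α β : V} (hα : α ∈ R) (hβ : β ∈ R) (hαα : B α α = 0)
    (hαβ : B α β = 0) : ∃ γ ∈ R, B γ γ ≠ 0 ∧ B α γ ≠ 0 ∧ B β γ ≠ 0 := by
  obtain ⟨γ, hγ, h1, h2⟩ := hR.exists_common_neighbor hirr hα hβ hαβ
  rw [hB γ β] at h2
  by_cases hγγ : B γ γ = 0
  · have hβα : B β α = 0 := by rw [hB, hαβ]
    rcases hR.add_or_sub_mem hα hγ hαα h1 with h | h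
    · exact ⟨_, h, by simpa [hγγ, hαα, hB γ α, ← two_mul] using h1, by simpa [hαα] using h1,
        by simpa [hβα] using h2⟩
    · refine ⟨_, h, ?_, by simpa [hαα] using h1, by simpa [hβα] using h2⟩
      simp only [map_sub, LinearMap.sub_apply, hγγ, hαα, hB γ α]
      intro h3
      exact h1 (by linear_combination (-1 / 2) * h3)
  · exact ⟨γ, hγ, hγγ, h1, h2⟩

/-! ### Odd roots fixed by an automorphism -/

/-- An isotropic vector `γ` with `(α,γ) = (α,α)` and `(β,γ) = (β,β)`, for orthogonal real roots
`α`, `β` such that `α - γ` and `β - γ` are roots, equals `α + β`: the pairings of `α - γ` with `β`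
and of `β - γ` with `α` force `(β,β) = -(α,α)`, and then `α - γ` and `-β` coincide. -/
lemma IsGRRS.eq_add_of_isotropic (hR : IsGRRS B R) (hB : ∀ x y : V, B x y = B y x)
    {α β γ : V} (hα : α ∈ R) (hβ : β ∈ R) (hαα : B α α ≠ 0) (hββ : B β β ≠ 0)
    (hαβ : B α β = 0) (hγγ : B γ γ = 0) (hαγ : B α γ = B α α) (hβγ : B β γ = B β β)
    (hx : α - γ ∈ R) (hy : β - γ ∈ R) : γ = α + β := by
  have hβα : B β α = 0 := by rw [hB, hαβ]
  have hγα : B γ α = B α α := by rw [hB, hαγ]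
  have hγβ : B γ β = B β β := by rw [hB, hβγ]
  have hxx : B (α - γ) (α - γ) = -B α α := by
    simp only [map_sub, LinearMap.sub_apply, hγγ, hαγ, hγα]; ring
  have hyy : B (β - γ) (β - γ) = -B β β := by
    simp only [map_sub, LinearMap.sub_apply, hγγ, hβγ, hγβ]; ring
  have hx0 : B (α - γ) (α - γ) ≠ 0 := by rw [hxx]; exact neg_ne_zero.2 hαα
  have hy0 : B (β - γ) (β - γ) ≠ 0 := by rw [hyy]; exact neg_ne_zero.2 hββ
  have hxβ : B (α - γ) β = -B β β := by
    simp only [map_sub, LinearMap.sub_apply, hαβ, hγβ]; ring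
  have hyα : B (β - γ) α = -B α α := by
    simp only [map_sub, LinearMap.sub_apply, hβα, hγα]; ring
  obtain ⟨n, hn, _⟩ := hR.reflect_real _ hx hx0 β hβ
  obtain ⟨m, hm, _⟩ := hR.reflect_real _ hy hy0 α hα
  obtain ⟨h1, h2, -⟩ := hR.pairing_mul_pairing hB hx hβ hx0 hββ hn (q := -2)
    (by rw [hxβ]; push_cast; ring)
  obtain ⟨h3, h4, -⟩ := hR.pairing_mul_pairing hB hy hα hy0 hαα hm (q := -2)
    (by rw [hyα]; push_cast; ring)
  rw [hxβ, hxx] at hn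
  rw [hyα, hyy] at hm
  -- `n = 2(β,β)/(α,α)` and `m = 2(α,α)/(β,β)`, so `n m = 4`, while `n, m ∈ {-1, -2}`
  have hnm : n * m = 4 := by
    have : ((n * m : ℤ) : K) = (4 : ℤ) := by
      push_cast
      apply mul_right_cancel₀ hαα
      linear_combination (m : K) * hn + 2 * hm
    exact_mod_cast this
  have hn2 : n = -2 := by nlinarith
  subst hn2
  push_cast at hn
  have hββ' : B β β = -B α α := by linear_combination (-1 / 2) * hn
  have := hR.eq_of_norm_eq hB hx (hR.neg_mem β hβ) hx0 (by
    rw [hxx]; simpa using hββ') (by rw [map_neg, hxβ, hxx, hββ']; ring)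
  have h5 : γ = α - (α - γ) := by abel
  rw [h5, this]
  abel

/-- The analogue of `IsGRRS.eq_add_of_isotropic` for a real root `γ`, of norm twice that of `α`
and `β`: the roots `γ - α = -r_γ α` and `β` coincide. -/
lemma IsGRRS.eq_add_of_real (hR : IsGRRS B R) (hB : ∀ x y : V, B x y = B y x)
    {α β γ : V} (hα : α ∈ R) (hβ : β ∈ R) (hγ : γ ∈ R) (hαα : B α α ≠ 0)
    (hαβ : B α β = 0) (hγγ : B γ γ ≠ 0) (hγα2 : B γ γ = 2 * B α α) (hγβ2 : B γ γ = 2 * B β β)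
    (hαγ : B α γ = B α α) (hβγ : B β γ = B β β) : γ = α + β := by
  have hβα : B β α = 0 := by rw [hB, hαβ]
  have hγα : B γ α = B α α := by rw [hB, hαγ]
  have h1 := hR.neg_mem _ (hR.reflect_mem hγ hα hγγ (n := 1) (by rw [hγα, hγα2]; norm_num))
  have h2 : -(α - ((1 : ℤ) : K) • γ) = γ - α := by simp
  rw [h2] at h1
  have hββ : B β β = B α α := by linear_combination (hγα2 - hγβ2) / 2
  have := hR.eq_of_norm_eq hB hβ h1 (by rw [hββ]; exact hαα) (by
    simp only [map_sub, LinearMap.sub_apply, hαγ, hγα, hγα2]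
    linear_combination -hββ) (by rw [map_sub, hβα, hβγ, sub_zero])
  rw [this]
  abel

/-- A common neighbour of two orthogonal real odd roots is a combination `±α ± β`. -/
lemma IsGRRS.eq_signed_add (hR : IsGRRS B R) (hB : ∀ x y : V, B x y = B y x)
    {α β γ : V} (hα : α ∈ R) (hβ : β ∈ R) (hγ : γ ∈ R) (hα2 : (2 : K) • α ∈ R)
    (hβ2 : (2 : K) • β ∈ R) (hαα : B α α ≠ 0) (hββ : B β β ≠ 0) (hαβ : B α β = 0)
    (hαγ : B α γ ≠ 0) (hβγ : B β γ ≠ 0) :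
    γ = α + β ∨ γ = α + -β ∨ γ = -α + β ∨ γ = -α + -β := by
  have hnα := hR.neg_mem α hα
  have hnβ := hR.neg_mem β hβ
  have hβα : B β α = 0 := by rw [hB, hαβ]
  by_cases hγγ : B γ γ = 0
  · have e1 : α + γ ∈ R → -α - γ ∈ R := fun h => by
      have := hR.neg_mem _ h
      rwa [neg_add, ← sub_eq_add_neg] at this
    have e2 : β + γ ∈ R → -β - γ ∈ R := fun h => by
      have := hR.neg_mem _ h
      rwa [neg_add, ← sub_eq_add_neg] at this
    rcases hR.isotropic_pairing_of_two_smul_mem hB hα hα2 hγ hαα hγγ hαγ with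
      ⟨h1, h1'⟩ | ⟨h1, h1'⟩ <;>
    rcases hR.isotropic_pairing_of_two_smul_mem hB hβ hβ2 hγ hββ hγγ hβγ with
      ⟨h2, h2'⟩ | ⟨h2, h2'⟩
    · exact Or.inl (hR.eq_add_of_isotropic hB hα hβ hαα hββ hαβ hγγ h1 h2 h1' h2')
    · exact Or.inr (Or.inl (hR.eq_add_of_isotropic hB hα hnβ hαα (by simpa using hββ)
        (by simpa using hαβ) hγγ h1 (by simp [h2]) h1' (e2 h2')))
    · exact Or.inr (Or.inr (Or.inl (hR.eq_add_of_isotropic hB hnα hβ (by simpa using hαα) hββ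
        (by simpa using hαβ) hγγ (by simp [h1]) h2 (e1 h1') h2')))
    · exact Or.inr (Or.inr (Or.inr (hR.eq_add_of_isotropic hB hnα hnβ (by simpa using hαα)
        (by simpa using hββ) (by simpa using hαβ) hγγ (by simp [h1]) (by simp [h2]) (e1 h1')
        (e2 h2'))))
  · obtain ⟨h3, h1⟩ := hR.real_pairing_of_two_smul_mem hB hα hα2 hγ hαα hγγ hαγ hαβ
      (by rwa [hB])
    obtain ⟨h4, h2⟩ := hR.real_pairing_of_two_smul_mem hB hβ hβ2 hγ hββ hγγ hβγ hβα
      (by rwa [hB])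
    rcases h1 with h1 | h1 <;> rcases h2 with h2 | h2
    · exact Or.inl (hR.eq_add_of_real hB hα hβ hγ hαα hαβ hγγ h3 h4 h1 h2)
    · exact Or.inr (Or.inl (hR.eq_add_of_real hB hα hnβ hγ hαα (by simpa using hαβ) hγγ h3
        (by simpa using h4) h1 (by simp [h2])))
    · exact Or.inr (Or.inr (Or.inl (hR.eq_add_of_real hB hnα hβ hγ (by simpa using hαα)
        (by simpa using hαβ) hγγ (by simpa using h3) h4 (by simp [h1]) h2)))
    · exact Or.inr (Or.inr (Or.inr (hR.eq_add_of_real hB hnα hnβ hγ (by simpa using hαα)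
        (by simpa using hαβ) hγγ (by simpa using h3) (by simpa using h4) (by simp [h1])
        (by simp [h2]))))

/-- A real root `x` with `k_{x,a} = ±2` for some fixed isotropic root `a` is itself fixed. -/
lemma IsGRRS.fixed_of_pairing_two (hR : IsGRRS B R) (hB : ∀ x y : V, B x y = B y x)
    (θ : V ≃ₗ[K] V) (hθB : ∀ x y : V, B (θ x) (θ y) = B x y) (hθR : ∀ x ∈ R, θ x ∈ R)
    {x a : V} (hx : x ∈ R) (ha : a ∈ R) (hθa : θ a = a) (haa : B a a = 0) (hxx : B x x ≠ 0)
    (hxa : B x a = B x x ∨ B x a = -B x x) : θ x = x := by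
  have hθxa : B (θ x) a = B x a := by
    conv_lhs => rw [← hθa]
    exact hθB x a
  rcases hxa with h | h
  · exact (hR.eq_of_pairing_two hB hx (hθR x hx) ha haa hxx (hθB x x) h (hθxa.trans h)).symm
  · exact (hR.eq_of_pairing_two hB hx (hθR x hx) (hR.neg_mem a ha) (by simpa using haa) hxx
      (hθB x x) (by simp [h]) (by simp [hθxa, h])).symm

/-- Two orthogonal fixed odd roots which are not opposite or equal have
a common non-orthogonal root which is fixed as well. -/
lemma IsGRRS.exists_fixed_common_neighbor (hR : IsGRRS B R) (hB : ∀ x y : V, B x y = B y x)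
    (hirr : GRRSIrreducible B R) (θ : V ≃ₗ[K] V) (hθB : ∀ x y : V, B (θ x) (θ y) = B x y)
    (hθR : ∀ x ∈ R, θ x ∈ R) {α β : V} (hα : α ∈ R) (hβ : β ∈ R) (hθα : θ α = α)
    (hθβ : θ β = β) (hoα : IsOddRoot B R α) (hoβ : IsOddRoot B R β) (hαβ : B α β = 0)
    (hne : α ≠ β) (hne' : α ≠ -β) :
    ∃ γ ∈ R, θ γ = γ ∧ B α γ ≠ 0 ∧ B β γ ≠ 0 := by
  have hβα : B β α = 0 := by rw [hB, hαβ]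
  -- one root isotropic, the other one real
  have mixed : ∀ {α β : V}, α ∈ R → β ∈ R → θ α = α → θ β = β → B α α = 0 → B β β ≠ 0 →
      (2 : K) • β ∈ R → B α β = 0 → ∃ γ ∈ R, θ γ = γ ∧ B α γ ≠ 0 ∧ B β γ ≠ 0 := by
    intro α β hα hβ hθα hθβ hαα hββ hβ2 hαβ
    have hβα : B β α = 0 := by rw [hB, hαβ]
    obtain ⟨γ, hγ, hγγ, h1, h2⟩ := hR.exists_real_common_neighbor hB hirr hα hβ hαα hαβ
    obtain ⟨h3, h4⟩ := hR.real_pairing_of_two_smul_mem hB hβ hβ2 hγ hββ hγγ h2 hβα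
      (by rwa [hB])
    -- `r_γ b = b - γ` is a real odd root, hence fixed, for `b = ±β` with `(b,γ) = (b,b)`
    have key : ∀ b ∈ R, (2 : K) • b ∈ R → θ b = b → B b b = B β β → B α b = 0 →
        B b γ = B b b → θ γ = γ := by
      intro b hb hb2 hθb hbb hαb hbγ
      have hγb : B γ b = B b b := by rw [hB, hbγ]
      have m1 := hR.reflect_mem hγ hb hγγ (n := 1) (by rw [hγb, h3, hbb]; norm_num)
      have m2 := hR.reflect_mem hγ hb2 hγγ (n := 2)
        (by rw [map_smul, hγb, h3, hbb]; simp)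
      have e1 : b - ((1 : ℤ) : K) • γ = b - γ := by simp
      have e2 : (2 : K) • b - ((2 : ℤ) : K) • γ = (2 : K) • (b - γ) := by
        push_cast; module
      rw [e1] at m1
      rw [e2] at m2
      have hnorm : B (b - γ) (b - γ) ≠ 0 := by
        simp only [map_sub, LinearMap.sub_apply, hbγ, hγb, h3, hbb]
        ring_nf
        exact hββ
      have hxa : B (b - γ) α ≠ 0 := by
        simpa [hB b α, hαb, hB γ α] using h1
      have hfix := hR.fixed_of_pairing_two hB θ hθB hθR m1 hα hθα hαα hnorm
        ((hR.isotropic_pairing_of_two_smul_mem hB m1 m2 hα hnorm hαα hxa).imp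
          And.left And.left)
      rw [map_sub, hθb] at hfix
      exact sub_right_injective hfix
    refine ⟨γ, hγ, ?_, h1, h2⟩
    rcases h4 with h4 | h4
    · exact key β hβ hβ2 hθβ rfl hαβ h4
    · exact key (-β) (hR.neg_mem β hβ) (by rw [smul_neg]; exact hR.neg_mem _ hβ2)
        (by rw [map_neg, hθβ]) (by simp) (by simpa using hαβ) (by simp [h4])
  by_cases hαα : B α α = 0
  · by_cases hββ : B β β = 0
    · obtain ⟨γ, hγ, hγγ, h1, h2⟩ := hR.exists_real_common_neighbor hB hirr hα hβ hαα hαβ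
      refine ⟨γ, hγ, ?_, h1, h2⟩
      -- either `k_{γ,a} = ±2`, whence `γ` is fixed, or `k_{γ,±a} = 1`
      have alt : ∀ a ∈ R, θ a = a → B a a = 0 → B a γ ≠ 0 →
          θ γ = γ ∨ 2 * B γ a = B γ γ ∨ 2 * B γ (-a) = B γ γ := by
        intro a ha hθa haa haγ
        obtain ⟨m, hm, _⟩ := hR.reflect_real γ hγ hγγ a ha
        have hm0 : m ≠ 0 := by
          rintro rfl
          exact haγ (by rw [hB]; simpa using hm)
        have hfix := hR.fixed_of_pairing_two hB θ hθB hθR hγ ha hθa haa hγγ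
        rcases hR.pairing_isotropic hB hγ ha haa hγγ hm0 hm with ⟨rfl | rfl, -⟩ | ⟨rfl | rfl, -⟩
        · right; left; simpa using hm
        · left; apply hfix; left; push_cast at hm; linear_combination hm / 2
        · right; right; push_cast at hm; rw [map_neg]; linear_combination -hm
        · left; apply hfix; right; push_cast at hm; linear_combination hm / 2
      have fin : ∀ a ∈ R, ∀ b ∈ R, θ a = a → θ b = b → B a a = 0 → B b b = 0 → B a b = 0 →
          a ≠ b → 2 * B γ a = B γ γ → 2 * B γ b = B γ γ → θ γ = γ := by
        intro a ha b hb hθa hθb haa hbb hab hne hγa hγb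
        have e1 : B (θ γ) a = B γ a := by
          conv_lhs => rw [← hθa]
          exact hθB γ a
        have e2 : B (θ γ) b = B γ b := by
          conv_lhs => rw [← hθb]
          exact hθB γ b
        exact (hR.eq_of_pairing_one_one hB hγ (hθR γ hγ) ha hb haa hbb hab hne hγγ (hθB γ γ)
          hγa hγb (by rw [e1, hγa]) (by rw [e2, hγb])).symm
      have hnα := hR.neg_mem α hα
      have hnβ := hR.neg_mem β hβ
      have hθnα : θ (-α) = -α := by rw [map_neg, hθα]
      have hθnβ : θ (-β) = -β := by rw [map_neg, hθβ]
      rcases alt α hα hθα hαα h1 with h | h3 | h3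
      · exact h
      all_goals rcases alt β hβ hθβ hββ h2 with h | h4 | h4
      · exact h
      · exact fin α hα β hβ hθα hθβ hαα hββ hαβ hne h3 h4
      · exact fin α hα (-β) hnβ hθα hθnβ hαα (by simpa using hββ) (by simpa using hαβ) hne'
          h3 h4
      · exact h
      · exact fin (-α) hnα β hβ hθnα hθβ (by simpa using hαα) hββ (by simpa using hαβ)
          (fun h => hne' (by rw [← h, neg_neg])) h3 h4
      · exact fin (-α) hnα (-β) hnβ hθnα hθnβ (by simpa using hαα) (by simpa using hββ)
          (by simpa using hαβ) (fun h => hne (neg_injective h)) h3 h4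
    · exact mixed hα hβ hθα hθβ hαα hββ (hoβ.resolve_left hββ) hαβ
  · by_cases hββ : B β β = 0
    · obtain ⟨γ, hγ, h, h1, h2⟩ := mixed hβ hα hθβ hθα hββ hαα (hoα.resolve_left hαα) hβα
      exact ⟨γ, hγ, h, h2, h1⟩
    · obtain ⟨γ, hγ, h1, h2⟩ := hR.exists_common_neighbor hirr hα hβ hαβ
      rw [hB γ β] at h2
      refine ⟨γ, hγ, ?_, h1, h2⟩
      rcases hR.eq_signed_add hB hα hβ hγ (hoα.resolve_left hαα) (hoβ.resolve_left hββ) hαα hββ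
        hαβ h1 h2 with rfl | rfl | rfl | rfl <;> simp only [map_add, map_neg, hθα, hθβ]

end Lemmas

/-- let `T` be the smallest subset of the fixed roots `S` of an automorphism
`θ` of an irreducible GRRS which contains all odd roots of `S` and is closed under
"nonzero inner product with an element of `S`".  Then exactly one of the following holds:
`T = ∅`; `T = {α, -α}` for an isotropic root `α`; or `T` is an irreducible GRRS in
`span(T)` containing at least one odd root. -/
theorem trichotomy_for_T {K V : Type*} [Field K] [CharZero K]
    [AddCommGroup V] [Module K V] [FiniteDimensional K V]
    (B : LinearMap.BilinForm K V) (hB : ∀ x y : V, B x y = B y x)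
    (R : Set V) (hR : IsGRRS B R) (hirr : GRRSIrreducible B R)
    (θ : V ≃ₗ[K] V) (hθB : ∀ x y : V, B (θ x) (θ y) = B x y) (hθR : θ '' R = R)
    (S : Set V) (hS : S = {α ∈ R | θ α = α})
    (T : Set V) (hTS : T ⊆ S)
    (hTodd : ∀ α ∈ S, IsOddRoot B R α → α ∈ T)
    (hTclosed : ∀ α ∈ T, ∀ β ∈ S, B α β ≠ 0 → β ∈ T)
    (hTmin : ∀ T₂ : Set V, T₂ ⊆ S → (∀ α ∈ S, IsOddRoot B R α → α ∈ T₂) →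
      (∀ α ∈ T₂, ∀ β ∈ S, B α β ≠ 0 → β ∈ T₂) → T ⊆ T₂) :
    ∀ P₁ P₂ P₃ : Prop,
      (P₁ ↔ T = ∅) →
      (P₂ ↔ ∃ α ∈ R, B α α = 0 ∧ T = {α, -α}) →
      (P₃ ↔ (IsGRRSIn B T ∧ GRRSIrreducible B T ∧ ∃ α ∈ T, IsOddRoot B T α)) →
      ((P₁ ∨ P₂ ∨ P₃) ∧ ¬(P₁ ∧ P₂) ∧ ¬(P₁ ∧ P₃) ∧ ¬(P₂ ∧ P₃)) := by
  intro P₁ P₂ P₃ e₁ e₂ e₃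
  rw [e₁, e₂, e₃]
  have hθR' : ∀ x ∈ R, θ x ∈ R := fun x hx => hθR ▸ Set.mem_image_of_mem θ hx
  have hSR : ∀ x ∈ S, x ∈ R := fun x hx => by rw [hS] at hx; exact hx.1
  have hSθ : ∀ x ∈ S, θ x = x := fun x hx => by rw [hS] at hx; exact hx.2
  have hmemS : ∀ x ∈ R, θ x = x → x ∈ S := fun x hx h => by rw [hS]; exact ⟨hx, h⟩
  have hSneg : ∀ x ∈ S, -x ∈ S := fun x hx =>
    hmemS _ (hR.neg_mem x (hSR x hx)) (by rw [map_neg, hSθ x hx])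
  refine ⟨?_, ?_, ?_, ?_⟩
  · by_cases hT : T = ∅
    · exact Or.inl hT
    by_cases hT2 : ∃ α ∈ R, B α α = 0 ∧ T = {α, -α}
    · exact Or.inr (Or.inl hT2)
    refine Or.inr (Or.inr ?_)
    have hTne : T.Nonempty := Set.nonempty_iff_ne_empty.2 hT
    have common : ∀ α ∈ T, ∀ β ∈ T, IsOddRoot B R α → IsOddRoot B R β → B α β = 0 →
        α ≠ β → α ≠ -β → ∃ γ ∈ T, B α γ ≠ 0 ∧ B β γ ≠ 0 := by
      intro α hα β hβ hoα hoβ hαβ hne hne'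
      obtain ⟨γ, hγ, hθγ, h1, h2⟩ := hR.exists_fixed_common_neighbor hB hirr θ hθB hθR'
        (hSR _ (hTS hα)) (hSR _ (hTS hβ)) (hSθ _ (hTS hα)) (hSθ _ (hTS hβ)) hoα hoβ hαβ hne hne'
      exact ⟨γ, hTclosed α hα γ (hmemS γ hγ hθγ) h1, h1, h2⟩
    -- for a root `α` orthogonal to `T`, the set `{α, -α}` would be admissible, so equal to `T`
    have hform : ∀ α ∈ T, ∃ β ∈ T, B α β ≠ 0 := by
      intro α hα
      by_contra! hcon
      have hαα := hcon α hα
      have hαS := hTS hα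
      have hnα : -α ∈ T := hTodd _ (hSneg α hαS) (Or.inl (by simpa using hαα))
      refine hT2 ⟨α, hSR α hαS, hαα, Set.Subset.antisymm ?_ ?_⟩
      · apply hTmin
        · rintro x (rfl | rfl)
          · exact hαS
          · exact hSneg α hαS
        · intro β hβ hoβ
          have hβT := hTodd β hβ hoβ
          by_contra hnot
          obtain ⟨γ, hγ, h1, -⟩ := common α hα β hβT (Or.inl hαα) hoβ (hcon β hβT)
            (fun h => hnot (Or.inl h.symm)) (fun h => hnot (Or.inr (by simp [h])))
          exact h1 (hcon γ hγ)
        · rintro x (rfl | rfl) β hβ hne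
          · exact absurd (hcon β (hTclosed _ hα β hβ hne)) hne
          · exact absurd (by simpa using hcon β (hTclosed _ hnα β hβ hne)) hne
      · rintro x (rfl | rfl)
        · exact hα
        · exact hnα
    -- a part without odd roots could be discarded, by minimality of `T`
    have hoddex : ∀ R₁ R₂ : Set V, R₁.Nonempty → R₁ ∪ R₂ = T → Disjoint R₁ R₂ →
        (∀ α ∈ R₁, ∀ β ∈ R₂, B α β = 0) → ∃ α ∈ R₁, IsOddRoot B R α := by
      intro R₁ R₂ hne hun hdis horth
      by_contra! hcon
      obtain ⟨x, hx⟩ := hne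
      have hsub : T ⊆ R₂ := by
        apply hTmin
        · exact fun y hy => hTS (hun ▸ Or.inr hy)
        · intro α hα hoα
          have : α ∈ R₁ ∪ R₂ := hun ▸ hTodd α hα hoα
          exact this.resolve_left fun h => hcon α h hoα
        · intro α hα β hβ hαβ
          have : β ∈ R₁ ∪ R₂ := hun ▸ hTclosed α (hun ▸ Or.inr hα) β hβ hαβ
          exact this.resolve_left fun h => hαβ (by rw [hB]; exact horth β h α hα)
      exact Set.disjoint_left.1 hdis hx (hsub (hun ▸ Or.inl hx))
    refine ⟨?_, ?_, ?_⟩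
    · refine ⟨hR.finite.subset fun x hx => hSR x (hTS hx), hTne,
        fun h => hR.zero_not_mem (hSR _ (hTS h)), hform, ?_, ?_, ?_⟩
      · intro α hα hαα β hβ
        obtain ⟨n, hn, hmem⟩ := hR.reflect_real α (hSR _ (hTS hα)) hαα β (hSR _ (hTS hβ))
        refine ⟨n, hn, ?_⟩
        by_cases hαβ : B α β = 0
        · have hn0 : (n : K) = 0 := by
            rw [hαβ, mul_zero, eq_comm] at hn
            exact (mul_eq_zero.1 hn).resolve_right hαα
          simpa [hn0] using hβ
        · refine hTclosed α hα _ (hmemS _ hmem ?_) ?_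
          · rw [map_sub, map_smul, hSθ _ (hTS hα), hSθ _ (hTS hβ)]
          · rw [map_sub, map_smul, smul_eq_mul, ← hn]
            intro h
            exact hαβ (by linear_combination -h)
      · intro α hα hαα
        obtain ⟨r, hr, h1, h2⟩ := hR.reflect_iso α (hSR _ (hTS hα)) hαα
        refine ⟨r, ?_, fun β hβ => h1 β (hSR _ (hTS hβ)), fun β hβ => h2 β (hSR _ (hTS hβ))⟩
        have hmaps : Set.MapsTo r T T := by
          intro β hβ
          have hβR := hSR _ (hTS hβ)
          by_cases hαβ : B α β = 0
          · rwa [h1 β hβR hαβ]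
          · have hmem := hr.mapsTo hβR
            rcases h2 β hβR hαβ with h | h <;> rw [h] at hmem ⊢
            · exact hTclosed α hα _ (hmemS _ hmem
                (by rw [map_add, hSθ _ (hTS hα), hSθ _ (hTS hβ)])) (by simpa [hαα] using hαβ)
            · exact hTclosed α hα _ (hmemS _ hmem
                (by rw [map_sub, hSθ _ (hTS hα), hSθ _ (hTS hβ)])) (by simpa [hαα] using hαβ)
        have hTfin : T.Finite := hR.finite.subset fun x hx => hSR x (hTS hx)
        have hinj : Set.InjOn r T := hr.injOn.mono fun x hx => hSR x (hTS hx)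
        exact ⟨hmaps, hinj, ((hTfin.injOn_iff_bijOn_of_mapsTo hmaps).1 hinj).surjOn⟩
      · intro α hα
        by_cases hαα : B α α = 0
        · exact hTodd _ (hSneg α (hTS hα)) (Or.inl (by simpa using hαα))
        · exact hTclosed α hα _ (hSneg α (hTS hα)) (by simpa using hαα)
    · rintro ⟨R₁, R₂, hne1, hne2, hun, hdis, horth⟩
      have hin1 : ∀ x ∈ R₁, x ∈ T := fun x hx => hun ▸ Or.inl hx
      have hin2 : ∀ x ∈ R₂, x ∈ T := fun x hx => hun ▸ Or.inr hx
      obtain ⟨α, hα, hoα⟩ := hoddex R₁ R₂ hne1 hun hdis horth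
      obtain ⟨β, hβ, hoβ⟩ := hoddex R₂ R₁ hne2 (by rw [Set.union_comm, hun]) hdis.symm
        (fun x hx y hy => by rw [hB]; exact horth y hy x hx)
      have hcommon : ∃ γ ∈ T, B α γ ≠ 0 ∧ B β γ ≠ 0 := by
        have hne : α ≠ β := fun h => Set.disjoint_left.1 hdis hα (h ▸ hβ)
        by_cases hne' : α = -β
        · obtain ⟨γ, hγ, h⟩ := hform α (hin1 α hα)
          refine ⟨γ, hγ, h, ?_⟩
          rw [hne'] at h
          simpa using h
        · exact common α (hin1 α hα) β (hin2 β hβ) hoα hoβ (horth α hα β hβ) hne hne'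
      obtain ⟨γ, hγ, h1, h2⟩ := hcommon
      have : γ ∈ R₁ ∪ R₂ := hun ▸ hγ
      rcases this with h | h
      · exact h2 (by rw [hB]; exact horth γ h β hβ)
      · exact h1 (horth α hα γ h)
    · obtain ⟨α, hα, hoα⟩ := hoddex T ∅ hTne (by simp) (by simp) (by simp)
      refine ⟨α, hα, ?_⟩
      by_cases hαα : B α α = 0
      · exact Or.inl hαα
      · refine Or.inr (hTclosed α hα _ (hmemS _ (hoα.resolve_left hαα) ?_) ?_)
        · rw [map_smul, hSθ _ (hTS hα)]
        · simpa using hαα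
  · rintro ⟨h, α, -, -, h'⟩
    rw [h] at h'
    exact Set.notMem_empty α (h' ▸ Or.inl rfl)
  · rintro ⟨h, hG, -⟩
    exact hG.nonempty.ne_empty h
  · rintro ⟨⟨α, -, hαα, rfl⟩, hG, -⟩
    obtain ⟨β, hβ, hne⟩ := hG.form_ne α (Or.inl rfl)
    rcases hβ with rfl | rfl
    · exact hne hαα
    · exact hne (by simpa using hαα)

end GRRS
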